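/- arXiv:1101.2193 — 2 statements merged into one kernel-verified Lean document; each statement's English description precedes it below -/
import Mathlib

section
/- For any R > 0, any center x0 ∈ ℝ³, any exponent δ with 1/2 < δ < 1, there exists a smooth function ψ : ℝ³ → ℝ compactly supported in B(x0, 2R) with 0 ≤ ψ ≤ 1, ψ = 1 on B(x0, R), and a constant C0 = C0(δ) > 0 (independent of R and x0) such that |∇ψ(x)| ≤ (C0/R) ψ(x)^δ and |Δψ(x)| ≤ (C0/R²) ψ(x)^{2δ-1} for all x ∈ ℝ³. -/
open Metric

/-- The Laplacian of a scalar function on `ℝ³` (sum of the second partial derivatives). -/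
noncomputable def lap3 (f : EuclideanSpace ℝ (Fin 3) → ℝ) (x : EuclideanSpace ℝ (Fin 3)) : ℝ :=
  ∑ i : Fin 3,
    fderiv ℝ (fun y => fderiv ℝ f y (EuclideanSpace.single i 1)) x (EuclideanSpace.single i 1)

/-!
The cut-off is a power `ψ = f ^ m` of a standard bump function `f` at scale `R`. By the Leibniz
rule every term of a `j`-th derivative of `f ^ m` keeps at least `m - j` undifferentiated factors
`f`, so `‖Dʲψ‖ ≤ C R⁻ʲ f ^ (m - j)`. Since `0 ≤ f ≤ 1` and
`f ^ (m - j) = ψ ^ (1 - j / m)` on the support, this is at most `C R⁻ʲ ψ ^ (1 - j (1 - δ))` as soon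
as `1 / m ≤ 1 - δ`. The constant does not depend on `R` and the center because bump functions of a
given shape are affine rescalings of one another.
-/

section Leibniz

variable {𝕜 E A : Type*} [NontriviallyNormedField 𝕜] [NormedAddCommGroup E] [NormedSpace 𝕜 E]
  [NormedRing A] [NormedAlgebra 𝕜 A]

theorem norm_iteratedFDeriv_mul_le_two_pow_mul {f g : E → A} {n : ℕ} (hf : ContDiff 𝕜 n f)
    (hg : ContDiff 𝕜 n g) {x : E} {B : ℝ}
    (h : ∀ i ≤ n, ‖iteratedFDeriv 𝕜 i f x‖ * ‖iteratedFDeriv 𝕜 (n - i) g x‖ ≤ B) :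
    ‖iteratedFDeriv 𝕜 n (fun y ↦ f y * g y) x‖ ≤ 2 ^ n * B :=
  calc
    _ ≤ ∑ i ∈ Finset.range (n + 1), (n.choose i : ℝ) * ‖iteratedFDeriv 𝕜 i f x‖
          * ‖iteratedFDeriv 𝕜 (n - i) g x‖ := norm_iteratedFDeriv_mul_le hf hg x le_rfl
    _ ≤ ∑ i ∈ Finset.range (n + 1), (n.choose i : ℝ) * B := by
      refine Finset.sum_le_sum fun i hi ↦ ?_
      rw [mul_assoc]
      gcongr
      exact h i (Finset.mem_range_succ_iff.1 hi)
    _ = 2 ^ n * B := by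
      rw [← Finset.sum_mul]
      exact_mod_cast congrArg (· * B) (congrArg (Nat.cast (R := ℝ)) (Nat.sum_range_choose n))

theorem norm_iteratedFDeriv_pow_le [NormOneClass A] {f : E → A} {n : ℕ} (hf : ContDiff 𝕜 n f)
    {x : E} (hfx : ‖f x‖ ≤ 1) {M r : ℝ} (hM : 1 ≤ M) (hr : 0 ≤ r)
    (hbound : ∀ i ≤ n, ‖iteratedFDeriv 𝕜 i f x‖ ≤ M * r ^ i) (m : ℕ) {j : ℕ} (hj : j ≤ n) :
    ‖iteratedFDeriv 𝕜 j (fun y ↦ f y ^ m) x‖ ≤ (2 ^ n * M) ^ m * r ^ j * ‖f x‖ ^ (m - j) := by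
  induction m generalizing j with
  | zero =>
    rcases j.eq_zero_or_pos with rfl | hj0
    · simp
    · simp only [pow_zero, iteratedFDeriv_const_of_ne hj0.ne']
      simpa using by positivity
  | succ m ih =>
    -- Truncated subtraction: an undifferentiated factor counts as `‖f x‖ ^ 1`, all others as `1`.
    have factor_le : ∀ i ≤ n, ‖iteratedFDeriv 𝕜 i f x‖ ≤ M * r ^ i * ‖f x‖ ^ (1 - i) := by
      rintro (_ | i) hi
      · simpa using le_mul_of_one_le_left (norm_nonneg (f x)) hM
      · simpa using hbound (i + 1) hi
    have term_le : ∀ i ≤ j,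
        ‖iteratedFDeriv 𝕜 i f x‖ * ‖iteratedFDeriv 𝕜 (j - i) (fun y ↦ f y ^ m) x‖
          ≤ M * (2 ^ n * M) ^ m * r ^ j * ‖f x‖ ^ (m + 1 - j) := by
      intro i hi
      calc
        _ ≤ M * r ^ i * ‖f x‖ ^ (1 - i)
              * ((2 ^ n * M) ^ m * r ^ (j - i) * ‖f x‖ ^ (m - (j - i))) := by
          gcongr
          exacts [factor_le i (hi.trans hj), ih ((Nat.sub_le j i).trans hj)]
        _ = M * (2 ^ n * M) ^ m * r ^ j * ‖f x‖ ^ (1 - i + (m - (j - i))) := by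
          rw [← pow_mul_pow_sub r hi]
          ring
        _ ≤ _ := by
          gcongr _ * ?_
          exact pow_le_pow_of_le_one (norm_nonneg _) hfx (by lia)
    have hfj : ContDiff 𝕜 j f := hf.of_le (mod_cast hj)
    calc
      _ ≤ 2 ^ j * (M * (2 ^ n * M) ^ m * r ^ j * ‖f x‖ ^ (m + 1 - j)) := by
        simp only [pow_succ' (f _)]
        exact norm_iteratedFDeriv_mul_le_two_pow_mul hfj (hfj.pow m) term_le
      _ ≤ 2 ^ n * (M * (2 ^ n * M) ^ m * r ^ j * ‖f x‖ ^ (m + 1 - j)) := by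
        gcongr
        exact one_le_two
      _ = _ := by ring

end Leibniz

theorem pow_le_rpow_pow {t : ℝ} (ht₀ : 0 ≤ t) (ht₁ : t ≤ 1) {m k : ℕ} (hk : k ≠ 0) {e : ℝ}
    (h : m * e ≤ k) : t ^ k ≤ (t ^ m) ^ e := by
  rcases ht₀.eq_or_lt with rfl | ht
  · rw [zero_pow hk]
    positivity
  · rw [← Real.rpow_natCast t m, ← Real.rpow_mul ht₀, ← Real.rpow_natCast t k]
    exact Real.rpow_le_rpow_of_exponent_ge ht ht₁ h

theorem exists_forall_norm_iteratedFDeriv_le {𝕜 E F : Type*} [NontriviallyNormedField 𝕜]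
    [NormedAddCommGroup E] [NormedSpace 𝕜 E] [NormedAddCommGroup F] [NormedSpace 𝕜 F] {f : E → F}
    {n : ℕ} (hf : ContDiff 𝕜 n f) (hsupp : HasCompactSupport f) :
    ∃ M, ∀ j ≤ n, ∀ x, ‖iteratedFDeriv 𝕜 j f x‖ ≤ M := by
  have bound (j : Fin (n + 1)) : ∃ M, ∀ x, ‖iteratedFDeriv 𝕜 j f x‖ ≤ M :=
    (hf.continuous_iteratedFDeriv (mod_cast j.is_le)).bounded_above_of_compact_support
      (hsupp.iteratedFDeriv j)
  choose M hM using bound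
  obtain ⟨M₀, hM₀⟩ := Finite.exists_le M
  exact ⟨M₀, fun j hj x ↦ (hM ⟨j, Nat.lt_succ_of_le hj⟩ x).trans (hM₀ _)⟩

section Cutoff

variable {E : Type*} [NormedAddCommGroup E] [NormedSpace ℝ E]

theorem exists_norm_iteratedFDeriv_contDiffBump_le [FiniteDimensional ℝ E] (n : ℕ) {q : ℝ}
    (hq : 1 < q) :
    ∃ M, 1 ≤ M ∧ ∀ (c : E) (f : ContDiffBump c), f.rOut / f.rIn = q →
      ∀ j ≤ n, ∀ x, ‖iteratedFDeriv ℝ j f x‖ ≤ M * f.rIn⁻¹ ^ j := by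
  let g : ContDiffBump (0 : E) := ⟨1, q, one_pos, hq⟩
  obtain ⟨M, hM⟩ := exists_forall_norm_iteratedFDeriv_le (𝕜 := ℝ) (g.contDiff (n := n))
    g.hasCompactSupport
  refine ⟨max M 1, le_max_right _ _, fun c f hf j hj x ↦ ?_⟩
  have hfg : (f : E → ℝ) = fun y ↦ g (f.rIn⁻¹ • (y - c)) := by
    ext y
    simp [ContDiffBump.apply, hf, g]
  have hr : 0 ≤ f.rIn⁻¹ := inv_nonneg.2 f.rIn_pos.le
  rw [hfg, iteratedFDeriv_comp_sub j c x (f := fun y ↦ g (f.rIn⁻¹ • y)),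
    iteratedFDeriv_comp_const_smul _ g.contDiff, norm_smul, Real.norm_of_nonneg (by positivity),
    mul_comm]
  gcongr
  exact (hM j hj _).trans (le_max_left _ _)

/-- A refined spatial cut-off at scale `R` around `x₀`, with exponent `δ` and constant `C`. All
derivatives up to order `n` are controlled, the `j`-th one with exponent `1 - j (1 - δ)`; this gives
the exponents `δ` and `2δ - 1` for `j = 1, 2`. If the exponent is negative and `ψ x = 0`, the
convention `0 ^ e = 0` for `e < 0` turns the bound into the vanishing of the derivative at `x`. -/
structure IsRefinedCutoff (n : ℕ) (δ C R : ℝ) (x₀ : E) (ψ : E → ℝ) : Prop where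
  contDiff : ContDiff ℝ (⊤ : ℕ∞) ψ
  hasCompactSupport : HasCompactSupport ψ
  tsupport_subset : tsupport ψ ⊆ ball x₀ (2 * R)
  nonneg : ∀ x, 0 ≤ ψ x
  le_one : ∀ x, ψ x ≤ 1
  eq_one : ∀ x ∈ ball x₀ R, ψ x = 1
  norm_iteratedFDeriv_le : ∀ j ≤ n, ∀ x,
    ‖iteratedFDeriv ℝ j ψ x‖ ≤ C / R ^ j * ψ x ^ (1 - j * (1 - δ))

theorem isRefinedCutoff_contDiffBump_pow [FiniteDimensional ℝ E] {δ : ℝ} {n m : ℕ} (hnm : n < m)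
    (hm : 1 ≤ m * (1 - δ)) {x₀ : E} (f : ContDiffBump x₀) (hf : f.rOut < 2 * f.rIn) {M : ℝ}
    (hM : 1 ≤ M) (hfM : ∀ j ≤ n, ∀ x, ‖iteratedFDeriv ℝ j f x‖ ≤ M * f.rIn⁻¹ ^ j) :
    IsRefinedCutoff n δ ((2 ^ n * M) ^ m) f.rIn x₀ (fun x ↦ f x ^ m) where
  contDiff := f.contDiff.pow m
  hasCompactSupport := f.hasCompactSupport.comp_left (zero_pow (Nat.ne_zero_of_lt hnm))
  tsupport_subset := calc
    tsupport (fun x ↦ f x ^ m) ⊆ tsupport f :=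
      closure_mono fun x ↦ mt fun hx ↦ by simp only [hx, zero_pow (Nat.ne_zero_of_lt hnm)]
    _ ⊆ ball x₀ (2 * f.rIn) := f.tsupport_eq ▸ closedBall_subset_ball hf
  nonneg _ := pow_nonneg f.nonneg m
  le_one _ := pow_le_one₀ f.nonneg f.le_one
  eq_one x hx := by rw [f.one_of_mem_closedBall (ball_subset_closedBall hx), one_pow]
  norm_iteratedFDeriv_le j hj x := by
    have hr := f.rIn_pos
    have exponent_le : m * (1 - j * (1 - δ)) ≤ ((m - j : ℕ) : ℝ) := by
      rw [Nat.cast_sub (hj.trans hnm.le)]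
      nlinarith [j.cast_nonneg (α := ℝ)]
    calc
      _ ≤ (2 ^ n * M) ^ m * f.rIn⁻¹ ^ j * ‖f x‖ ^ (m - j) :=
        norm_iteratedFDeriv_pow_le f.contDiff
          ((Real.norm_of_nonneg f.nonneg).trans_le f.le_one) hM (by positivity)
          (fun i hi ↦ hfM i hi x) m hj
      _ = (2 ^ n * M) ^ m / f.rIn ^ j * f x ^ (m - j) := by
        rw [Real.norm_of_nonneg f.nonneg, inv_pow, div_eq_mul_inv]
      _ ≤ (2 ^ n * M) ^ m / f.rIn ^ j * (f x ^ m) ^ (1 - j * (1 - δ)) := by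
        gcongr
        exact pow_le_rpow_pow f.nonneg f.le_one (by lia) exponent_le

theorem refined_spatial_cutoff_exists_general [FiniteDimensional ℝ E] (n : ℕ) {δ : ℝ}
    (hδ : δ < 1) :
    ∃ C, 0 < C ∧ ∀ R, 0 < R → ∀ x₀ : E, ∃ ψ : E → ℝ, IsRefinedCutoff n δ C R x₀ ψ := by
  obtain ⟨M, hM, hbump⟩ := exists_norm_iteratedFDeriv_contDiffBump_le (E := E) n
    (q := 3 / 2) (by norm_num)
  obtain ⟨k, hk⟩ := exists_nat_ge (1 / (1 - δ))
  obtain ⟨m, hnm, hkm⟩ : ∃ m, n < m ∧ k ≤ m := ⟨n + k + 1, by lia, by lia⟩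
  have hm : 1 ≤ m * (1 - δ) :=
    (div_le_iff₀ (sub_pos.2 hδ)).1 (hk.trans (Nat.cast_le.2 hkm))
  refine ⟨(2 ^ n * M) ^ m, by positivity, fun R hR x₀ ↦ ?_⟩
  let f : ContDiffBump x₀ := ⟨R, 3 / 2 * R, hR, by linarith⟩
  have hratio : f.rOut / f.rIn = 3 / 2 := mul_div_cancel_right₀ _ hR.ne'
  have houter : f.rOut < 2 * f.rIn := by
    dsimp only [f]
    linarith
  exact ⟨_, isRefinedCutoff_contDiffBump_pow hnm hm f houter hM (hbump x₀ f hratio)⟩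

end Cutoff

theorem norm_gradient_eq_norm_fderiv {𝕜 F : Type*} [RCLike 𝕜] [NormedAddCommGroup F]
    [InnerProductSpace 𝕜 F] [CompleteSpace F] (f : F → 𝕜) (x : F) :
    ‖gradient f x‖ = ‖fderiv 𝕜 f x‖ :=
  LinearIsometryEquiv.norm_map _ _

theorem abs_lap3_le_three_mul {f : EuclideanSpace ℝ (Fin 3) → ℝ} {x : EuclideanSpace ℝ (Fin 3)}
    (hf : DifferentiableAt ℝ (fderiv ℝ f) x) : |lap3 f x| ≤ 3 * ‖iteratedFDeriv ℝ 2 f x‖ := by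
  have term_le (i : Fin 3) : |fderiv ℝ (fun y ↦ fderiv ℝ f y (EuclideanSpace.single i 1)) x
      (EuclideanSpace.single i 1)| ≤ ‖iteratedFDeriv ℝ 2 f x‖ := by
    let e : EuclideanSpace ℝ (Fin 3) := EuclideanSpace.single i 1
    have hD : fderiv ℝ (fun y ↦ fderiv ℝ f y e) x e = iteratedFDeriv ℝ 2 f x ![e, e] := by
      rw [fderiv_clm_apply hf (differentiableAt_const e), iteratedFDeriv_two_apply]
      simp
    calc
      _ = ‖iteratedFDeriv ℝ 2 f x ![e, e]‖ := congrArg norm hD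
      _ ≤ ‖iteratedFDeriv ℝ 2 f x‖ := by
        simpa [Fin.prod_univ_two, e] using (iteratedFDeriv ℝ 2 f x).le_opNorm ![e, e]
  calc
    |lap3 f x| ≤ ∑ _i : Fin 3, ‖iteratedFDeriv ℝ 2 f x‖ :=
      (Finset.abs_sum_le_sum_abs _ _).trans (Finset.sum_le_sum fun i _ ↦ term_le i)
    _ = 3 * ‖iteratedFDeriv ℝ 2 f x‖ := by simp

namespace IsRefinedCutoff

variable {n : ℕ} {δ C R : ℝ}

theorem norm_gradient_le {F : Type*} [NormedAddCommGroup F] [InnerProductSpace ℝ F]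
    [CompleteSpace F] {x₀ : F} {ψ : F → ℝ} (h : IsRefinedCutoff n δ C R x₀ ψ) (hn : 1 ≤ n) (x : F) :
    ‖gradient ψ x‖ ≤ C / R * ψ x ^ δ := by
  simpa [norm_gradient_eq_norm_fderiv] using h.norm_iteratedFDeriv_le 1 hn x

theorem abs_lap3_le {x₀ : EuclideanSpace ℝ (Fin 3)} {ψ : EuclideanSpace ℝ (Fin 3) → ℝ}
    (h : IsRefinedCutoff n δ C R x₀ ψ) (hn : 2 ≤ n) (x : EuclideanSpace ℝ (Fin 3)) :
    |lap3 ψ x| ≤ 3 * C / R ^ 2 * ψ x ^ (2 * δ - 1) := by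
  have hdiff : DifferentiableAt ℝ (fderiv ℝ ψ) x :=
    ((contDiff_infty.1 h.contDiff 2).fderiv_right (m := 1) le_rfl).differentiable one_ne_zero x
  calc
    |lap3 ψ x| ≤ 3 * ‖iteratedFDeriv ℝ 2 ψ x‖ := abs_lap3_le_three_mul hdiff
    _ ≤ 3 * (C / R ^ 2 * ψ x ^ (1 - (2 : ℕ) * (1 - δ))) := by
      gcongr
      exact h.norm_iteratedFDeriv_le 2 hn x
    _ = 3 * C / R ^ 2 * ψ x ^ (2 * δ - 1) := by
      rw [← mul_assoc, mul_div_assoc]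
      congr 2
      push_cast
      ring

end IsRefinedCutoff

/-- **Refined spatial cut-offs exist.** For any `1/2 < δ < 1` there is a constant `C0 > 0`
(depending only on `δ`) such that for every `R > 0` and every center `x0 ∈ ℝ³` there is a
smooth `ψ` compactly supported in `B(x0, 2R)`, `0 ≤ ψ ≤ 1`, `ψ = 1` on `B(x0, R)`, with
`|∇ψ| ≤ (C0/R) ψ^δ` and `|Δψ| ≤ (C0/R²) ψ^(2δ-1)` pointwise. -/
theorem refined_spatial_cutoff_exists (δ : ℝ) (hδ1 : 1 / 2 < δ) (hδ2 : δ < 1) :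
    ∃ C0 : ℝ, 0 < C0 ∧
      ∀ (R : ℝ), 0 < R → ∀ x0 : EuclideanSpace ℝ (Fin 3),
        ∃ ψ : EuclideanSpace ℝ (Fin 3) → ℝ,
          ContDiff ℝ (⊤ : ℕ∞) ψ ∧ HasCompactSupport ψ ∧ tsupport ψ ⊆ ball x0 (2 * R) ∧
          (∀ x, 0 ≤ ψ x) ∧ (∀ x, ψ x ≤ 1) ∧ (∀ x ∈ ball x0 R, ψ x = 1) ∧
          (∀ x, ‖gradient ψ x‖ ≤ C0 / R * ψ x ^ δ) ∧
          (∀ x, |lap3 ψ x| ≤ C0 / R ^ 2 * ψ x ^ (2 * δ - 1)) := by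
  obtain ⟨C, hC, h⟩ :=
    refined_spatial_cutoff_exists_general (E := EuclideanSpace ℝ (Fin 3)) 2 hδ2
  refine ⟨3 * C, by positivity, fun R hR x0 ↦ (h R hR x0).imp fun ψ hψ ↦
    ⟨hψ.contDiff, hψ.hasCompactSupport, hψ.tsupport_subset, hψ.nonneg, hψ.le_one, hψ.eq_one,
      fun x ↦ (hψ.norm_gradient_le one_le_two x).trans ?_, hψ.abs_lap3_le le_rfl⟩⟩
  have hψx := hψ.nonneg x
  gcongr
  linarith
end

section
/- For any T > 0 and any δ with 1/2 < δ < 1, there exists a smooth function η : ℝ → ℝ compactly supported in (0, 2T) with 0 ≤ η ≤ 1, η = 1 on [T/4, 5T/4], and a constant C0 = C0(δ) > 0 independent of T such that |η'(t)| ≤ (C0/T) η(t)^δ for all t. -/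
/-!
If `0 ≤ f ≤ 1` is smooth with bounded derivative, then `η = f ^ (n + 1)` satisfies
`|η'| = (n + 1) * f ^ n * |f'|`, and `f ^ n ≤ (f ^ (n + 1)) ^ δ` as soon as `(n + 1) * δ ≤ n`,
which holds for large `n` because `δ < 1`. So a power of any smooth cut-off is a refined one.
Dilating one fixed refined cut-off by `T` divides its derivative by `T`, so the constant does not
depend on `T`.
-/

open Set
open scoped Pointwise ContDiff Manifold

theorem pow_le_pow_succ_rpow {x δ : ℝ} {n : ℕ} (hn : n ≠ 0) (hδ : (n + 1) * δ ≤ n)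
    (hx₀ : 0 ≤ x) (hx₁ : x ≤ 1) : x ^ n ≤ (x ^ (n + 1)) ^ δ := by
  calc x ^ n = x ^ (n : ℝ) := (Real.rpow_natCast x n).symm
    _ ≤ x ^ (((n + 1 : ℕ) : ℝ) * δ) :=
        Real.rpow_le_rpow_of_exponent_ge_of_imp hx₀ hx₁ (by exact_mod_cast hδ) (by simp [hn])
    _ = (x ^ (n + 1)) ^ δ := Real.rpow_natCast_mul hx₀ (n + 1) δ

theorem exists_nat_ne_zero_succ_mul_le {δ : ℝ} (hδ : δ < 1) : ∃ n : ℕ, n ≠ 0 ∧ (n + 1) * δ ≤ n := by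
  obtain ⟨n, hn⟩ := exists_nat_gt (max 0 (δ / (1 - δ)))
  obtain ⟨hn₀, hnδ⟩ := max_lt_iff.1 hn
  rw [div_lt_iff₀ (sub_pos.2 hδ)] at hnδ
  exact ⟨n, by exact_mod_cast hn₀.ne', by linarith⟩

section NormedSpace

variable {E : Type*} [NormedAddCommGroup E] [NormedSpace ℝ E]

theorem norm_fderiv_pow_succ_le {f : E → ℝ} {x : E} {δ : ℝ} {n : ℕ}
    (hf : DifferentiableAt ℝ f x) (hf₀ : 0 ≤ f x) (hf₁ : f x ≤ 1)
    (hn : n ≠ 0) (hδ : (n + 1) * δ ≤ n) :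
    ‖fderiv ℝ (fun y ↦ f y ^ (n + 1)) x‖ ≤
      (n + 1) * ‖fderiv ℝ f x‖ * (f x ^ (n + 1)) ^ δ := by
  calc ‖fderiv ℝ (fun y ↦ f y ^ (n + 1)) x‖ = (n + 1) * ‖fderiv ℝ f x‖ * f x ^ n := by
        rw [fderiv_fun_pow (n + 1) hf, norm_smul, add_tsub_cancel_right, nsmul_eq_mul,
          Real.norm_of_nonneg (by positivity)]
        push_cast
        ring
    _ ≤ (n + 1) * ‖fderiv ℝ f x‖ * (f x ^ (n + 1)) ^ δ := by
        gcongr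
        exact pow_le_pow_succ_rpow hn hδ hf₀ hf₁

/-- `η` is a smooth cut-off, equal to `1` on `K` and compactly supported in `U`, which is refined
in the sense that its derivative is controlled by its own `δ`-th power: `‖Dη‖ ≤ C * η ^ δ`.
Since `0 ^ δ = 0` for all `δ ≠ 0`, negative ones included, the bound at a zero of `η` then reads
`Dη = 0`. -/
structure IsRefinedCutoff_s2 (δ C : ℝ) (K U : Set E) (η : E → ℝ) : Prop where
  contDiff : ContDiff ℝ ∞ η
  hasCompactSupport : HasCompactSupport η
  tsupport_subset : tsupport η ⊆ U
  nonneg : ∀ x, 0 ≤ η x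
  le_one : ∀ x, η x ≤ 1
  eq_one : ∀ x ∈ K, η x = 1
  norm_fderiv_le : ∀ x, ‖fderiv ℝ η x‖ ≤ C * η x ^ δ

theorem exists_contDiff_hasCompactSupport_eq_one [FiniteDimensional ℝ E] {K U : Set E}
    (hK : IsCompact K) (hU : IsOpen U) (hKU : K ⊆ U) :
    ∃ f : E → ℝ, ContDiff ℝ ∞ f ∧ HasCompactSupport f ∧ tsupport f ⊆ U ∧
      (∀ x, f x ∈ Icc 0 1) ∧ ∀ x ∈ K, f x = 1 := by
  obtain ⟨L, hL, hKL, hLU⟩ := exists_compact_between hK hU hKU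
  obtain ⟨f, hf, hf_range, hf_support, hf_one⟩ :=
    exists_contMDiff_support_eq_eq_one_iff (n := (⊤ : ℕ∞)) 𝓘(ℝ, E) isOpen_interior hK.isClosed hKL
  have hfL : tsupport f ⊆ L :=
    closure_minimal (hf_support.subset.trans interior_subset) hL.isClosed
  exact ⟨f, hf.contDiff, hL.of_isClosed_subset (isClosed_tsupport f) hfL, hfL.trans hLU,
    fun x ↦ hf_range (mem_range_self x), fun x hx ↦ (hf_one x).1 hx⟩

theorem exists_isRefinedCutoff [FiniteDimensional ℝ E] {δ : ℝ} (hδ : δ < 1) {K U : Set E}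
    (hK : IsCompact K) (hU : IsOpen U) (hKU : K ⊆ U) :
    ∃ C > 0, ∃ η : E → ℝ, IsRefinedCutoff_s2 δ C K U η := by
  obtain ⟨f, hf, hf_compact, hfU, hf_mem, hf_one⟩ :=
    exists_contDiff_hasCompactSupport_eq_one hK hU hKU
  obtain ⟨M, hM⟩ := (hf_compact.fderiv ℝ).exists_bound_of_continuous
    (hf.continuous_fderiv (by simp))
  obtain ⟨n, hn, hnδ⟩ := exists_nat_ne_zero_succ_mul_le hδ
  have hM₀ : 0 ≤ M := (norm_nonneg _).trans (hM 0)
  have h_support : tsupport (fun x ↦ f x ^ (n + 1)) ⊆ tsupport f :=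
    tsupport_comp_subset (g := (· ^ (n + 1))) (zero_pow n.succ_ne_zero) f
  refine ⟨(n + 1) * (M + 1), by positivity, fun x ↦ f x ^ (n + 1), ?_⟩
  exact
    { contDiff := hf.pow (n + 1)
      hasCompactSupport := hf_compact.of_isClosed_subset (isClosed_tsupport _) h_support
      tsupport_subset := h_support.trans hfU
      nonneg x := pow_nonneg (hf_mem x).1 _
      le_one x := pow_le_one₀ (hf_mem x).1 (hf_mem x).2
      eq_one x hx := by rw [hf_one x hx, one_pow]
      norm_fderiv_le x := by
        have hf₀ : 0 ≤ f x := (hf_mem x).1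
        have hfM : ‖fderiv ℝ f x‖ ≤ M + 1 := (hM x).trans (by simp)
        calc ‖fderiv ℝ (fun y ↦ f y ^ (n + 1)) x‖
            ≤ (n + 1) * ‖fderiv ℝ f x‖ * (f x ^ (n + 1)) ^ δ :=
              norm_fderiv_pow_succ_le (hf.differentiable (by simp) x) hf₀ (hf_mem x).2 hn hnδ
          _ ≤ (n + 1) * (M + 1) * (f x ^ (n + 1)) ^ δ := by gcongr }

theorem IsRefinedCutoff_s2.comp_inv_smul {δ C c : ℝ} {K U : Set E} {η : E → ℝ}
    (hη : IsRefinedCutoff_s2 δ C K U η) (hc : c ≠ 0) :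
    IsRefinedCutoff_s2 δ (C / |c|) (c • K) (c • U) (fun x ↦ η (c⁻¹ • x)) where
  contDiff := hη.contDiff.comp (contDiff_const_smul c⁻¹)
  hasCompactSupport := hη.hasCompactSupport.comp_smul (inv_ne_zero hc)
  tsupport_subset := by
    rw [← preimage_smul_inv₀ hc]
    exact (tsupport_comp_subset_preimage η (continuous_const_smul c⁻¹)).trans
      (preimage_mono hη.tsupport_subset)
  nonneg x := hη.nonneg _
  le_one x := hη.le_one _
  eq_one x hx := hη.eq_one _ ((mem_smul_set_iff_inv_smul_mem₀ hc K x).1 hx)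
  norm_fderiv_le x := by
    calc ‖fderiv ℝ (fun y ↦ η (c⁻¹ • y)) x‖ = ‖fderiv ℝ η (c⁻¹ • x)‖ / |c| := by
          rw [fderiv_comp_smul, norm_smul, norm_inv, Real.norm_eq_abs, inv_mul_eq_div]
      _ ≤ C * η (c⁻¹ • x) ^ δ / |c| := by gcongr; exact hη.norm_fderiv_le _
      _ = C / |c| * η (c⁻¹ • x) ^ δ := by ring

end NormedSpace

theorem refined_temporal_cutoff_exists_general (δ : ℝ) (hδ : δ < 1) :
    ∃ C0 : ℝ, 0 < C0 ∧
      ∀ T : ℝ, 0 < T →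
        ∃ η : ℝ → ℝ,
          ContDiff ℝ (⊤ : ℕ∞) η ∧ HasCompactSupport η ∧ tsupport η ⊆ Set.Ioo 0 (2 * T) ∧
          (∀ t, 0 ≤ η t) ∧ (∀ t, η t ≤ 1) ∧
          (∀ t ∈ Set.Icc (T / 4) (5 * T / 4), η t = 1) ∧
          (∀ t, |deriv η t| ≤ C0 / T * η t ^ δ) := by
  have h_sub : Icc (1 / 4 : ℝ) (5 / 4) ⊆ Ioo 0 2 := Icc_subset_Ioo (by norm_num) (by norm_num)
  obtain ⟨C, hC, η, hη⟩ := exists_isRefinedCutoff hδ isCompact_Icc isOpen_Ioo h_sub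
  refine ⟨C, hC, fun T hT ↦ ⟨fun t ↦ η (T⁻¹ • t), ?_⟩⟩
  have hK : T • Icc (1 / 4 : ℝ) (5 / 4) = Icc (T / 4) (5 * T / 4) := by
    rw [LinearOrderedField.smul_Icc hT]; ring_nf
  have hU : T • Ioo (0 : ℝ) 2 = Ioo 0 (2 * T) := by
    rw [LinearOrderedField.smul_Ioo hT, mul_zero, mul_comm]
  have hηT := hη.comp_inv_smul hT.ne'
  rw [hK, hU, abs_of_pos hT] at hηT
  refine ⟨hηT.contDiff, hηT.hasCompactSupport, hηT.tsupport_subset, hηT.nonneg, hηT.le_one,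
    hηT.eq_one, fun t ↦ ?_⟩
  rw [← Real.norm_eq_abs, norm_deriv_eq_norm_fderiv]
  exact hηT.norm_fderiv_le t

/-- **Refined temporal cut-offs exist.** For any `1/2 < δ < 1` there is a constant `C0 > 0`
(depending only on `δ`) such that for every `T > 0` there is a smooth `η : ℝ → ℝ` compactly
supported in `(0, 2T)`, `0 ≤ η ≤ 1`, `η = 1` on `[T/4, 5T/4]`, with `|η'| ≤ (C0/T) η^δ`
pointwise. -/
theorem refined_temporal_cutoff_exists (δ : ℝ) (hδ1 : 1 / 2 < δ) (hδ2 : δ < 1) :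
    ∃ C0 : ℝ, 0 < C0 ∧
      ∀ T : ℝ, 0 < T →
        ∃ η : ℝ → ℝ,
          ContDiff ℝ (⊤ : ℕ∞) η ∧ HasCompactSupport η ∧ tsupport η ⊆ Set.Ioo 0 (2 * T) ∧
          (∀ t, 0 ≤ η t) ∧ (∀ t, η t ≤ 1) ∧
          (∀ t ∈ Set.Icc (T / 4) (5 * T / 4), η t = 1) ∧
          (∀ t, |deriv η t| ≤ C0 / T * η t ^ δ) :=
  refined_temporal_cutoff_exists_general δ hδ2
end
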